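/- Let G be a connected nonbipartite unicyclic graph of order n whose unique cycle C has odd length k with k < n, and let X be an eigenvector of the signless Laplacian Q(G) corresponding to the least eigenvalue q_min(G). Then there exists a vertex u on the cycle C with degree at least 3 in G such that X(u) ≠ 0. -/

import Mathlib

open scoped Classical

/-- The signless Laplacian matrix `Q(G) = D(G) + A(G)` of a finite simple graph. -/
noncomputable def signlessLaplacian {V : Type*} [Fintype V] (G : SimpleGraph V) :
    Matrix V V ℝ :=
  fun i j => (if i = j then (G.degree i : ℝ) else 0) + (if G.Adj i j then 1 else 0)

/-- The least eigenvalue of the signless Laplacian of `G`. -/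
noncomputable def qmin {V : Type*} [Fintype V] (G : SimpleGraph V) : ℝ :=
  sInf {μ : ℝ | ∃ x : V → ℝ, x ≠ 0 ∧ (signlessLaplacian G).mulVec x = μ • x}

/-- Energy of an edge. -/
def edgeEn {V : Type*} (x : V → ℝ) : Sym2 V → ℝ :=
  Sym2.lift ⟨fun a b => (x a + x b) ^ 2, fun a b => by ring⟩

@[simp] lemma edgeEn_mk {V : Type*} (x : V → ℝ) (a b : V) :
    edgeEn x s(a, b) = (x a + x b) ^ 2 := rfl

lemma edgeEn_nonneg {V : Type*} (x : V → ℝ) (e : Sym2 V) : 0 ≤ edgeEn x e := by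
  induction e with | _ a b => simp only [edgeEn_mk]; positivity

/-- Total energy. -/
noncomputable def totEn {V : Type*} [Fintype V] (G : SimpleGraph V) (x : V → ℝ) : ℝ :=
  ∑ e ∈ G.edgeFinset, edgeEn x e

open Matrix in
lemma quad_eq {V : Type*} [Fintype V] (G : SimpleGraph V) (x : V → ℝ) :
    x ⬝ᵥ (signlessLaplacian G).mulVec x = totEn G x := by
  have h1 : signlessLaplacian G = G.incMatrix ℝ * (G.incMatrix ℝ)ᵀ := by
    rw [SimpleGraph.incMatrix_mul_transpose]
    ext i j
    simp only [signlessLaplacian, of_apply]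
    by_cases h : i = j
    · subst h; simp
    · simp [h]
  rw [h1, ← mulVec_mulVec, dotProduct_mulVec, ← mulVec_transpose, totEn]
  simp only [dotProduct]
  rw [← Finset.sum_subset (Finset.subset_univ G.edgeFinset)]
  · refine Finset.sum_congr rfl fun e he => ?_
    rw [SimpleGraph.mem_edgeFinset] at he
    induction e with | _ a b =>
    have hab : a ≠ b := G.ne_of_adj he
    have : ((G.incMatrix ℝ)ᵀ *ᵥ x) s(a, b) = x a + x b := by
      simp only [mulVec, dotProduct, transpose_apply]
      rw [← Finset.sum_subset (Finset.subset_univ ({a, b} : Finset V)), Finset.sum_pair hab]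
      · rw [SimpleGraph.incMatrix_of_mem_incidenceSet, SimpleGraph.incMatrix_of_mem_incidenceSet]
        · simp
        · exact ⟨he, by simp⟩
        · exact ⟨he, by simp⟩
      · intro c _ hc
        rw [SimpleGraph.incMatrix_of_notMem_incidenceSet, zero_mul]
        rintro ⟨_, h⟩
        simp at h hc
        tauto
    rw [this, edgeEn_mk]; ring
  · intro e _ he
    rw [SimpleGraph.mem_edgeFinset] at he
    have : ((G.incMatrix ℝ)ᵀ *ᵥ x) e = 0 := by
      simp only [mulVec, dotProduct, transpose_apply]
      refine Finset.sum_eq_zero fun c _ => ?_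
      rw [SimpleGraph.incMatrix_of_notMem_incidenceSet, zero_mul]
      exact fun h => he h.1
    rw [this, zero_mul]

lemma totEn_nonneg {V : Type*} [Fintype V] (G : SimpleGraph V) (x : V → ℝ) : 0 ≤ totEn G x :=
  Finset.sum_nonneg fun e _ => edgeEn_nonneg x e

open Matrix in
lemma totEn_of_eig {V : Type*} [Fintype V] (G : SimpleGraph V) (x : V → ℝ) (μ : ℝ)
    (h : (signlessLaplacian G).mulVec x = μ • x) : totEn G x = μ * ∑ i, x i ^ 2 := by
  rw [← quad_eq, h, dotProduct_smul, smul_eq_mul]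
  simp [dotProduct, sq]

lemma sum_sq_pos' {V : Type*} [Fintype V] (x : V → ℝ) (hx : x ≠ 0) : 0 < ∑ i, x i ^ 2 := by
  obtain ⟨a, ha⟩ := Function.ne_iff.1 hx
  exact Finset.sum_pos' (fun i _ => sq_nonneg _) ⟨a, Finset.mem_univ _, by
    have : x a ≠ 0 := ha
    positivity⟩

open Matrix in
lemma rayleigh {V : Type*} [Fintype V] (G : SimpleGraph V) (W : V → ℝ) :
    qmin G * ∑ i, W i ^ 2 ≤ totEn G W := by
  have hbdd : BddBelow {μ : ℝ | ∃ x : V → ℝ, x ≠ 0 ∧ (signlessLaplacian G).mulVec x = μ • x} := by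
    refine ⟨0, ?_⟩
    rintro μ ⟨x, hx, h⟩
    have h1 := totEn_of_eig G x μ h
    have h2 := totEn_nonneg G x
    have h3 := sum_sq_pos' x hx
    by_contra hneg
    push Not at hneg
    nlinarith
  set M : Matrix V V ℝ := signlessLaplacian G - qmin G • (1 : Matrix V V ℝ) with hM
  have hMv : ∀ x, M.mulVec x = (signlessLaplacian G).mulVec x - qmin G • x := by
    intro x
    rw [hM, sub_mulVec, smul_mulVec, one_mulVec]
  have hherm : M.IsHermitian := by
    ext i j
    by_cases h : i = j
    · subst h; simp
    · simp [hM, signlessLaplacian, G.adj_comm i j, one_apply, h, Ne.symm h]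
  have hpsd : M.PosSemidef := by
    rw [hherm.posSemidef_iff_eigenvalues_nonneg]
    intro j
    have h := hherm.mulVec_eigenvectorBasis j
    rw [hMv] at h
    have hmem : hherm.eigenvalues j + qmin G ∈
        {μ : ℝ | ∃ x : V → ℝ, x ≠ 0 ∧ (signlessLaplacian G).mulVec x = μ • x} := by
      refine ⟨(hherm.eigenvectorBasis j).ofLp, ?_, ?_⟩
      · intro h0
        apply hherm.eigenvectorBasis.toBasis.ne_zero j
        simpa using h0
      · rw [add_smul, ← h]; simp
    have := csInf_le hbdd hmem
    change qmin G ≤ _ at this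
    change 0 ≤ _
    linarith
  have := hpsd.dotProduct_mulVec_nonneg W
  rw [hMv, dotProduct_sub, dotProduct_smul, star_trivial, quad_eq] at this
  simp only [dotProduct, smul_eq_mul, ← sq] at this
  linarith

lemma zval_succ {k : ℕ} [NeZero k] (hk : 3 ≤ k) {i : ZMod k} (h : i.val + 1 < k) :
    (i + 1).val = i.val + 1 := by
  have h1 : (1 : ZMod k).val = 1 := ZMod.val_one'' (by omega)
  rw [ZMod.val_add_of_lt (by rw [h1]; exact h), h1]

lemma zsucc_zero {k : ℕ} [NeZero k] (i : ZMod k) (h : i.val + 1 = k) : i + 1 = 0 := by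
  have := congrArg (Nat.cast : ℕ → ZMod k) h
  simpa using this

lemma propagate {V : Type*} (G : SimpleGraph V) (hconn : G.Connected) (P : V → Prop) (a : V)
    (ha : P a) (h : ∀ x y, G.Adj x y → P x → P y) (v : V) : P v := by
  obtain ⟨w⟩ := hconn.preconnected a v
  induction w with
  | nil => exact ha
  | cons hadj _ ih => exact ih (h _ _ hadj ha)

/-- The edge set of the cycle `f`. -/
noncomputable def cyc {V : Type*} {k : ℕ} [NeZero k] (f : ZMod k → V) : Finset (Sym2 V) :=
  Finset.univ.image fun i => s(f i, f (i + 1))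

lemma two_ne {k : ℕ} (hk : 3 ≤ k) (i : ZMod k) : i + 1 + 1 ≠ i := by
  intro h
  have h2 : ((2 : ℕ) : ZMod k) = 0 := by
    push_cast
    linear_combination h
  rw [ZMod.natCast_eq_zero_iff] at h2
  exact absurd (Nat.le_of_dvd (by norm_num) h2) (by omega)

lemma cyc_inj {V : Type*} {k : ℕ} (hk : 3 ≤ k) (f : ZMod k → V)
    (hf : Function.Injective f) : Function.Injective fun i => s(f i, f (i + 1)) := by
  intro i j h
  simp only [Sym2.eq_iff] at h
  rcases h with h | h
  · exact hf h.1
  · exfalso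
    have h1 := hf h.1
    have h2 := hf h.2
    rw [h1] at h2
    exact two_ne hk j h2

lemma sum_cyc {V : Type*} {k : ℕ} [NeZero k] (hk : 3 ≤ k) (f : ZMod k → V)
    (hf : Function.Injective f) (F : Sym2 V → ℝ) :
    ∑ e ∈ cyc f, F e = ∑ i, F s(f i, f (i + 1)) := by
  rw [cyc, Finset.sum_image]
  exact fun a _ b _ h => cyc_inj hk f hf h

lemma cyc_sub {V : Type*} [Fintype V] (G : SimpleGraph V) {k : ℕ} [NeZero k] (f : ZMod k → V)
    (hadj : ∀ i, G.Adj (f i) (f (i + 1))) : cyc f ⊆ G.edgeFinset := by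
  intro e he
  simp only [cyc, Finset.mem_image] at he
  obtain ⟨i, _, rfl⟩ := he
  simpa using hadj i

/-- The sum functional of an edge. -/
def edgeLin {V : Type*} : Sym2 V → ((V → ℝ) →ₗ[ℝ] ℝ) :=
  Sym2.lift ⟨fun a b => LinearMap.proj a + LinearMap.proj b, fun _ _ => add_comm _ _⟩

lemma edgeLin_mk {V : Type*} (a b : V) (x : V → ℝ) : edgeLin s(a, b) x = x a + x b := rfl

lemma extend {V : Type*} [Fintype V] (G : SimpleGraph V) (hconn : G.Connected)
    (huni : G.edgeFinset.card = Fintype.card V) {k : ℕ} [NeZero k] (hk : 3 ≤ k) (f : ZMod k → V)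
    (hf : Function.Injective f) (hadj : ∀ i, G.Adj (f i) (f (i + 1))) (g : ZMod k → ℝ) :
    ∃ W : V → ℝ, (∀ i, W (f i) = g i) ∧
      ∀ a b, G.Adj a b → s(a, b) ∉ cyc f → W a + W b = 0 := by
  let H : Finset (Sym2 V) := G.edgeFinset \ cyc f
  let L1 : (V → ℝ) →ₗ[ℝ] (H → ℝ) := LinearMap.pi fun e => edgeLin e.1
  let L2 : (V → ℝ) →ₗ[ℝ] (ZMod k → ℝ) := LinearMap.pi fun i => LinearMap.proj (f i)
  have hcc : (cyc f).card = k := by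
    rw [cyc, Finset.card_image_of_injective _ (cyc_inj hk f hf), Finset.card_univ, ZMod.card]
  have hH : H.card + k = Fintype.card V := by
    rw [← huni, ← hcc]
    exact Finset.card_sdiff_add_card_eq_card (cyc_sub G f hadj)
  have hker : ∀ x, (L1.prod L2) x = 0 → x = 0 := by
    intro x hx
    have hx1 : ∀ a b, G.Adj a b → s(a, b) ∉ cyc f → x a + x b = 0 := by
      intro a b hab hn
      have := congrFun (congrArg Prod.fst hx) ⟨s(a, b), by simp [H, hab, hn]⟩
      exact this
    have hx2 : ∀ i, x (f i) = 0 := fun i => congrFun (congrArg Prod.snd hx) i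
    funext v
    refine propagate G hconn (fun v => x v = 0) (f 0) (hx2 0) ?_ v
    intro a b hab ha
    by_cases h : s(a, b) ∈ cyc f
    · simp only [cyc, Finset.mem_image, Sym2.eq_iff] at h
      obtain ⟨i, _, h | h⟩ := h
      · rw [← h.2]; exact hx2 _
      · rw [← h.1]; exact hx2 _
    · have := hx1 a b hab h
      change x b = 0
      change x a = 0 at ha
      linarith
  have hsurj : Function.Surjective (L1.prod L2) := by
    rw [← LinearMap.injective_iff_surjective_of_finrank_eq_finrank]
    · exact (injective_iff_map_eq_zero _).2 hker
    · simp [ZMod.card, hH]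
  obtain ⟨W, hW⟩ := hsurj (0, g)
  refine ⟨W, fun i => congrFun (congrArg Prod.snd hW) i, ?_⟩
  intro a b hab hn
  exact congrFun (congrArg Prod.fst hW) ⟨s(a, b), by simp [H, hab, hn]⟩

lemma core {V : Type*} [Fintype V] (G : SimpleGraph V) (hconn : G.Connected)
    (huni : G.edgeFinset.card = Fintype.card V) {k : ℕ} [NeZero k] (hk : 3 ≤ k) (f : ZMod k → V)
    (hf : Function.Injective f) (hadj : ∀ i, G.Adj (f i) (f (i + 1)))
    (hlt : k < Fintype.card V) (q : ℝ) (hray : ∀ W : V → ℝ, q * ∑ i, W i ^ 2 ≤ totEn G W)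
    (X : V → ℝ) (hX : X ≠ 0) (hq : totEn G X = q * ∑ i, X i ^ 2)
    (hz : ∀ i, 3 ≤ G.degree (f i) → X (f i) = 0) : False := by
  -- edges leaving the cycle start at zeros
  have hout : ∀ i z, G.Adj (f i) z → z ∉ Set.range f → X (f i) = 0 := by
    intro i z hiz hzr
    apply hz
    have h1 : G.Adj (f i) (f (i - 1)) := by
      have := (hadj (i - 1)).symm
      rwa [sub_add_cancel] at this
    have h2 : f (i + 1) ≠ f (i - 1) := by
      intro h
      have := hf h
      apply two_ne hk (i - 1)
      rw [sub_add_cancel]; exact this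
    have hsub : ({f (i + 1), f (i - 1), z} : Finset V) ⊆ G.neighborFinset (f i) := by
      intro x hx
      simp only [Finset.mem_insert, Finset.mem_singleton] at hx
      rw [SimpleGraph.mem_neighborFinset]
      rcases hx with rfl | rfl | rfl
      · exact hadj i
      · exact h1
      · exact hiz
    have hc : ({f (i + 1), f (i - 1), z} : Finset V).card = 3 := by
      refine Finset.card_eq_three.2 ⟨_, _, _, h2, ?_, ?_, rfl⟩
      · rintro rfl; exact hzr ⟨_, rfl⟩
      · rintro rfl; exact hzr ⟨_, rfl⟩
    rw [← hc, ← SimpleGraph.card_neighborFinset_eq_degree]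
    exact Finset.card_le_card hsub
  obtain ⟨i0, z0, hiz0, hz0⟩ : ∃ i z, G.Adj (f i) z ∧ z ∉ Set.range f := by
    by_contra hcon
    push Not at hcon
    have hall : ∀ v, v ∈ Set.range f := by
      refine propagate G hconn _ (f 0) ⟨0, rfl⟩ ?_
      rintro x y hxy ⟨i, rfl⟩
      exact hcon i y hxy
    have := Fintype.card_le_of_surjective f hall
    rw [ZMod.card] at this
    omega
  have hX0 : X (f i0) = 0 := hout i0 z0 hiz0 hz0
  have hXpos := sum_sq_pos' X hX
  have hcycmem : ∀ i, s(f i, f (i + 1)) ∈ cyc f := fun i =>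
    Finset.mem_image_of_mem _ (Finset.mem_univ i)
  have hqpos : 0 < q := by
    rcases lt_trichotomy q 0 with h | h | h
    · have := totEn_nonneg G X
      nlinarith
    · exfalso
      rw [h, zero_mul, totEn, Finset.sum_eq_zero_iff_of_nonneg
        (fun e _ => edgeEn_nonneg X e)] at hq
      apply hX
      funext v
      refine propagate G hconn (fun v => X v = 0) (f i0) hX0 ?_ v
      intro a b hab ha
      have := hq s(a, b) (by simpa using hab)
      rw [edgeEn_mk, ha, zero_add] at this
      simpa using this
    · exact h
  have hsplit : ∀ Y : V → ℝ, totEn G Y =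
      ∑ i, (Y (f i) + Y (f (i + 1))) ^ 2 + ∑ e ∈ G.edgeFinset \ cyc f, edgeEn Y e := by
    intro Y
    rw [totEn, ← Finset.sum_sdiff (cyc_sub G f hadj), sum_cyc hk f hf]
    simp [add_comm]
  have hsq : ∀ Y : V → ℝ, ∑ v, Y v ^ 2 = ∑ i, Y (f i) ^ 2 +
      ∑ v ∈ Finset.univ \ Finset.univ.image f, Y v ^ 2 := by
    intro Y
    rw [← Finset.sum_sdiff (Finset.subset_univ (Finset.univ.image f)),
      Finset.sum_image (fun a _ b _ h => hf h), add_comm]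
  -- the part of X off the cycle
  have hcycX : ∀ i, X (f i) = 0 := by
    by_contra hcon
    push Not at hcon
    obtain ⟨j0, hj0⟩ := hcon
    let T : V → ℝ := fun v => if v ∈ Set.range f then 0 else X v
    have hT : totEn G T ≤ ∑ e ∈ G.edgeFinset \ cyc f, edgeEn X e := by
      rw [hsplit]
      have : ∑ i, (T (f i) + T (f (i + 1))) ^ 2 = 0 := by simp [T]
      rw [this, zero_add]
      refine Finset.sum_le_sum fun e he => ?_
      have he' : e ∈ G.edgeFinset := (Finset.mem_sdiff.1 he).1
      induction e with | _ a b =>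
      have hab : G.Adj a b := by simpa using he'
      simp only [edgeEn_mk, T]
      by_cases h1 : a ∈ Set.range f <;> by_cases h2 : b ∈ Set.range f
      · simp only [h1, h2, if_true]; nlinarith [sq_nonneg (X a + X b)]
      · have : X a = 0 := by
          obtain ⟨i, rfl⟩ := h1
          exact hout i b hab h2
        simp only [h1, h2, if_true, if_false, this, le_refl]
      · have : X b = 0 := by
          obtain ⟨i, rfl⟩ := h2
          exact hout i a hab.symm h1
        simp only [h1, h2, if_true, if_false, this, le_refl]
      · simp only [h1, h2, if_false, le_refl]
    have hT2 : ∑ v, T v ^ 2 = ∑ v ∈ Finset.univ \ Finset.univ.image f, X v ^ 2 := by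
      rw [hsq]
      have : ∑ i, T (f i) ^ 2 = 0 := by simp [T]
      rw [this, zero_add]
      refine Finset.sum_congr rfl fun v hv => ?_
      have : v ∉ Set.range f := by simpa using hv
      simp only [T, this, if_false]
    have hE : ∑ i, (X (f i) + X (f (i + 1))) ^ 2 ≤ q * ∑ i, X (f i) ^ 2 := by
      have h1 := hray T
      have h2 := hsplit X
      have h3 := hsq X
      rw [hT2] at h1
      rw [hq, h3, mul_add] at h2
      linarith
    -- rotate
    obtain ⟨W, hW1, hW2⟩ := extend G hconn huni hk f hf hadj (fun i => X (f (i + (j0 - i0))))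
    have hWE : totEn G W = ∑ i, (X (f i) + X (f (i + 1))) ^ 2 := by
      rw [hsplit]
      have : ∑ e ∈ G.edgeFinset \ cyc f, edgeEn W e = 0 := by
        refine Finset.sum_eq_zero fun e he => ?_
        rw [Finset.mem_sdiff] at he
        induction e with | _ a b =>
        rw [edgeEn_mk, hW2 a b (by simpa using he.1) he.2]; norm_num
      rw [this, add_zero, ← Equiv.sum_comp (Equiv.addRight (j0 - i0))
        (fun i => (X (f i) + X (f (i + 1))) ^ 2)]
      refine Finset.sum_congr rfl fun i _ => ?_
      rw [hW1, hW1, Equiv.coe_addRight, add_right_comm]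
    have hWs : ∑ i, W (f i) ^ 2 = ∑ i, X (f i) ^ 2 := by
      rw [← Equiv.sum_comp (Equiv.addRight (j0 - i0)) (fun i => X (f i) ^ 2)]
      refine Finset.sum_congr rfl fun i _ => ?_
      rw [hW1, Equiv.coe_addRight]
    have hWz : W z0 ≠ 0 := by
      have h1 : s(f i0, z0) ∉ cyc f := by
        simp only [cyc, Finset.mem_image, Sym2.eq_iff]
        rintro ⟨i, _, h | h⟩
        · exact hz0 ⟨_, h.2⟩
        · exact hz0 ⟨_, h.1⟩
      have h2 := hW2 _ _ hiz0 h1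
      rw [hW1, add_sub_cancel] at h2
      intro h
      rw [h, add_zero] at h2
      exact hj0 h2
    have hWpos : 0 < ∑ v ∈ Finset.univ \ Finset.univ.image f, W v ^ 2 :=
      Finset.sum_pos' (fun _ _ => sq_nonneg _) ⟨z0, by simpa using hz0, by positivity⟩
    have h1 := hray W
    rw [hsq W, hWE, hWs] at h1
    nlinarith
  -- now X vanishes on the cycle
  obtain ⟨s, hs1, hs2⟩ := extend G hconn huni hk f hf hadj (fun i => (-1) ^ i.val)
  have habs : ∀ v, s v = 1 ∨ s v = -1 := by
    refine propagate G hconn _ (f 0) ?_ ?_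
    · rw [hs1]; exact neg_one_pow_eq_or _ _
    · intro a b hab ha
      by_cases h : s(a, b) ∈ cyc f
      · simp only [cyc, Finset.mem_image, Sym2.eq_iff] at h
        obtain ⟨i, _, h | h⟩ := h
        · rw [← h.2, hs1]; exact neg_one_pow_eq_or _ _
        · rw [← h.1, hs1]; exact neg_one_pow_eq_or _ _
      · have := hs2 a b hab h
        rcases ha with ha | ha
        · right; linarith
        · left; linarith
  set e0 : Sym2 V := s(f (-1), f (-1 + 1)) with he0
  have halt : ∀ a b, G.Adj a b → s(a, b) ≠ e0 → s a + s b = 0 := by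
    intro a b hab hne
    by_cases h : s(a, b) ∈ cyc f
    · simp only [cyc, Finset.mem_image] at h
      obtain ⟨i, _, h⟩ := h
      have hi : i ≠ -1 := by
        rintro rfl
        exact hne h.symm
      have hval : (i + 1).val = i.val + 1 := by
        apply zval_succ hk
        by_contra hcc
        have h2 := ZMod.val_lt i
        exact hi (eq_neg_of_add_eq_zero_left (zsucc_zero i (by omega)))
      have h0 : s (f i) + s (f (i + 1)) = 0 := by
        rw [hs1, hs1, hval, pow_succ]; ring
      rw [Sym2.eq_iff] at h
      rcases h with h | h
      · rw [← h.1, ← h.2]; exact h0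
      · rw [← h.1, ← h.2, add_comm]; exact h0
    · exact hs2 a b hab h
  set S : ℝ := ∑ v, |X v| with hS
  have hSpos : 0 < S := by
    obtain ⟨a, ha⟩ := Function.ne_iff.1 hX
    exact Finset.sum_pos' (fun i _ => abs_nonneg _) ⟨a, Finset.mem_univ _, abs_pos.2 ha⟩
  have key : ∀ t : ℝ, 0 < t → q * (2 * t * S) ≤ 4 * t ^ 2 := by
    intro t ht
    have h1 := hray (fun v => s v * (|X v| + t))
    have h2 : totEn G (fun v => s v * (|X v| + t)) ≤
        ∑ e ∈ G.edgeFinset, (edgeEn X e + if e = e0 then 4 * t ^ 2 else 0) := by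
      refine Finset.sum_le_sum fun e he => ?_
      by_cases hee : e = e0
      · rw [if_pos hee, hee, he0, edgeEn_mk, edgeEn_mk, hcycX, hcycX]
        rcases habs (f (-1)) with h | h <;> rcases habs (f (-1 + 1)) with h' | h' <;>
          rw [h, h', abs_zero] <;> nlinarith
      · rw [if_neg hee, add_zero]
        induction e with | _ a b =>
        have hab : G.Adj a b := by simpa using he
        have hsb : s b = - s a := by linarith [halt a b hab hee]
        have hsa : s a ^ 2 = 1 := by rcases habs a with h | h <;> rw [h] <;> norm_num
        rw [edgeEn_mk, edgeEn_mk, hsb]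
        have : (s a * (|X a| + t) + -s a * (|X b| + t)) ^ 2 = (|X a| - |X b|) ^ 2 := by
          linear_combination (|X a| - |X b|) ^ 2 * hsa
        rw [this]
        have h3 : -(X a * X b) ≤ |X a| * |X b| := by
          rw [← abs_mul]; exact neg_le_abs _
        nlinarith [sq_abs (X a), sq_abs (X b)]
    rw [Finset.sum_add_distrib, Finset.sum_ite_eq' ] at h2
    have h3 : (if e0 ∈ G.edgeFinset then 4 * t ^ 2 else 0) ≤ 4 * t ^ 2 := by
      split_ifs
      · exact le_refl _
      · positivity
    have h4 : ∑ v, X v ^ 2 + 2 * t * S ≤ ∑ v, (s v * (|X v| + t)) ^ 2 := by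
      rw [hS, Finset.mul_sum, ← Finset.sum_add_distrib]
      refine Finset.sum_le_sum fun v _ => ?_
      have hsa : s v ^ 2 = 1 := by rcases habs v with h | h <;> rw [h] <;> norm_num
      rw [mul_pow, hsa]
      nlinarith [sq_abs (X v), sq_nonneg t]
    have h5 := mul_le_mul_of_nonneg_left h4 hqpos.le
    rw [mul_add, ← hq] at h5
    rw [totEn] at h5
    linarith
  have hqS : 0 < q * S := mul_pos hqpos hSpos
  have := key (q * S / 4) (by positivity)
  nlinarith

/-- In a connected nonbipartite unicyclic graph whose (unique, odd) cycle has length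
`k < n`, every eigenvector for the least `Q`-eigenvalue is nonzero at some vertex of
the cycle of degree at least `3`. -/
theorem exists_cycle_vertex_nonzero_of_qmin_eigenvector
    {V : Type*} [Fintype V] (n : ℕ) (G : SimpleGraph V) (hcard : Fintype.card V = n)
    (hconn : G.Connected) (huni : G.edgeSet.ncard = n)
    (v : V) (c : G.Walk v v) (hc : c.IsCycle) (hodd : Odd c.length) (hlt : c.length < n)
    (X : V → ℝ) (hX : X ≠ 0)
    (heig : (signlessLaplacian G).mulVec X = qmin G • X) :
    ∃ u ∈ c.support, 3 ≤ G.degree u ∧ X u ≠ 0 := by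
  by_contra hcon
  push Not at hcon
  have hk := hc.three_le_length
  have : NeZero c.length := ⟨by omega⟩
  have hval := fun i : ZMod c.length => ZMod.val_lt i
  refine core G hconn ?_ hk (fun i => c.getVert i.val) ?_ ?_ (by omega) (qmin G) (rayleigh G) X hX
    (totEn_of_eig G X _ heig) ?_
  · rw [hcard, ← huni, ← SimpleGraph.coe_edgeFinset, Set.ncard_coe_finset]
  · intro i j hij
    apply ZMod.val_injective
    have hi := hval i
    have hj := hval j
    exact hc.getVert_injOn' (by rw [Set.mem_ofPred_eq]; omega) (by rw [Set.mem_ofPred_eq]; omega) hij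
  · intro i
    have h := c.adj_getVert_succ (hval i)
    rcases Nat.lt_or_ge (i.val + 1) c.length with h1 | h1
    · rw [zval_succ hk h1]; exact h
    · have h2 : i.val + 1 = c.length := by have := hval i; omega
      have h3 : i + 1 = 0 := zsucc_zero i h2
      rw [h3, ZMod.val_zero, c.getVert_zero]
      rw [h2, c.getVert_length] at h
      exact h
  · intro i hi
    exact hcon _ (c.getVert_mem_support _) hi
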